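/- Let d ≥ 1, H ∈ (0,1/2), let f : ℝ^d → ℝ be continuous with compact support, and define p(t,x,y) = (2π t^{2H})^{−d/2} exp(−‖x−y‖²/(2 t^{2H})) and u(t,x) = ∫_{ℝ^d} p(t,x,y) f(y) dy for t > 0, with u(0,x) = f(x). Then: (i) for every t > 0 and x ∈ ℝ^d, the conformable fractional derivative of order 2H in t satisfies T_{2H} u(t,x) = H Δ_x u(t,x); and (ii) u(t,x) → f(x) as t → 0⁺ for every x ∈ ℝ^d. In probabilistic terms, u(t,x) = E[f(x + B^H(t))] where B^H is fractional Brownian motion of Hurst index H started at 0, and it solves the conformable fractional Cauchy problem T_{2H} u = H Δ_x u, u(0,x) = f(x). -/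

import Mathlib

noncomputable section
open Real Filter Topology

/-- The conformable fractional derivative of order `α` of `f` at `t`:
`f` is `α`-differentiable at `t` with conformable derivative `L` if
`(f (t + ε * t^(1-α)) - f t) / ε → L` as `ε → 0`. -/
def HasConformableDerivAt (α : ℝ) (f : ℝ → ℝ) (L t : ℝ) : Prop :=
  Tendsto (fun ε : ℝ => (f (t + ε * t ^ (1 - α)) - f t) / ε) (𝓝[≠] (0 : ℝ)) (𝓝 L)

/-- The Laplacian of `f : ℝ^d → ℝ` at `x`: the sum over the coordinate
directions of the second partial derivatives. -/
def laplacian {d : ℕ} (f : EuclideanSpace ℝ (Fin d) → ℝ)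
    (x : EuclideanSpace ℝ (Fin d)) : ℝ :=
  ∑ j : Fin d,
    fderiv ℝ (fun y => fderiv ℝ f y (EuclideanSpace.single j 1)) x
      (EuclideanSpace.single j 1)

/-- The transition density of fractional Brownian motion of Hurst index `H`:
the Gaussian density with mean `x` and covariance `t^(2H)` times the identity. -/
def fbmKernel (d : ℕ) (H : ℝ) (t : ℝ) (x y : EuclideanSpace ℝ (Fin d)) : ℝ :=
  (2 * Real.pi * t ^ (2 * H)) ^ (-(d : ℝ) / 2) *
    Real.exp (-‖x - y‖ ^ 2 / (2 * t ^ (2 * H)))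

/-!
In the clock `c = t ^ (2 * H)` the function `u` is the convolution of `f` with the heat kernel
`g c`, and `T_{2H}` is `2 * H` times the ordinary derivative with respect to `c`. As
`∂_c g = Δ g / 2`, equation (i) is the heat equation for `f ⋆ g c`. The derivatives of `g c`
involved are bounded, locally uniformly in `c`, so integrability of `f` suffices to differentiate
under the integral. For (ii), `g c` is an approximate identity as `c → 0⁺`.
-/

section ConformableDerivative

variable {α f' t : ℝ} {f g : ℝ → ℝ}

lemma hasConformableDerivAt_of_hasDerivAt (hf : HasDerivAt f f' t) :
    HasConformableDerivAt α f (f' * t ^ (1 - α)) t := by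
  have hline : HasDerivAt (fun ε : ℝ => t + ε * t ^ (1 - α)) (t ^ (1 - α)) 0 := by
    simpa using ((hasDerivAt_id (0 : ℝ)).mul_const (t ^ (1 - α))).const_add t
  have hcomp : HasDerivAt (fun ε : ℝ => f (t + ε * t ^ (1 - α))) (f' * t ^ (1 - α)) 0 :=
    HasDerivAt.comp (h₂ := f) 0 (by simpa using hf) hline
  simpa [HasConformableDerivAt, div_eq_inv_mul] using hcomp.tendsto_slope_zero

/- `T_α` is `α` times the ordinary derivative with respect to the clock `t ^ α`. -/
lemma hasConformableDerivAt_of_eventuallyEq_comp_rpow (ht : 0 < t)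
    (hg : HasDerivAt g f' (t ^ α)) (hfg : f =ᶠ[𝓝 t] fun s => g (s ^ α)) :
    HasConformableDerivAt α f (α * f') t := by
  have hclock : HasDerivAt (fun s : ℝ => s ^ α) (α * t ^ (α - 1)) t :=
    Real.hasDerivAt_rpow_const (Or.inl ht.ne')
  have hcancel : t ^ (α - 1) * t ^ (1 - α) = 1 := by
    rw [← Real.rpow_add ht, sub_add_sub_cancel, sub_self, Real.rpow_zero]
  convert hasConformableDerivAt_of_hasDerivAt ((hg.comp t hclock).congr_of_eventuallyEq hfg) using 1
  linear_combination (-α * f') * hcancel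

end ConformableDerivative

section Convolution

open MeasureTheory ContinuousLinearMap
open scoped Convolution

variable {G F : Type*} [NormedAddCommGroup G] [MeasurableSpace G] [BorelSpace G]
  [SecondCountableTopology G] [NormedAddCommGroup F] [NormedSpace ℝ F]
  {μ : Measure G} {f : G → ℝ} {C C' : ℝ}

lemma convolutionExists_of_integrable_of_bounded {g : G → F} (hf : Integrable f μ)
    (hg : Continuous g) (hgC : ∀ z, ‖g z‖ ≤ C) : ConvolutionExists f g (lsmul ℝ ℝ) μ := fun x =>
  hf.smul_bdd C (hg.comp (by fun_prop : Continuous fun y => x - y)).aestronglyMeasurable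
    (Eventually.of_forall fun y => hgC (x - y))

lemma hasFDerivAt_convolution_of_bounded [NormedSpace ℝ G] {g : G → F} (hf : Integrable f μ)
    (hg : ContDiff ℝ 1 g) (hgC : ∀ z, ‖g z‖ ≤ C) (hgC' : ∀ z, ‖fderiv ℝ g z‖ ≤ C') (x : G) :
    HasFDerivAt (f ⋆[lsmul ℝ ℝ, μ] g) ((f ⋆[lsmul ℝ ℝ, μ] fderiv ℝ g) x) x := by
  have hg' : Continuous (fderiv ℝ g) := hg.continuous_fderiv one_ne_zero
  refine hasFDerivAt_integral_of_dominated_of_fderiv_le (bound := fun y => ‖f y‖ * C')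
    (F' := fun x y => f y • fderiv ℝ g (x - y)) univ_mem
    (Eventually.of_forall fun x =>
      (convolutionExists_of_integrable_of_bounded hf hg.continuous hgC x).aestronglyMeasurable)
    (convolutionExists_of_integrable_of_bounded hf hg.continuous hgC x)
    (convolutionExists_of_integrable_of_bounded hf hg' hgC' x).aestronglyMeasurable
    (Eventually.of_forall fun y x _ => ?_) (hf.norm.mul_const C')
    (Eventually.of_forall fun y x _ => ?_)
  · rw [norm_smul]
    gcongr
    exact hgC' _
  · have hgxy : HasFDerivAt g (fderiv ℝ g (x - y)) (x - y) :=
      (hg.differentiable one_ne_zero _).hasFDerivAt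
    exact (hgxy.comp x ((hasFDerivAt_id x).sub_const y)).const_smul (f y)

lemma fderiv_convolution_apply_of_bounded [NormedSpace ℝ G] {g : G → F} (hf : Integrable f μ)
    (hg : ContDiff ℝ 1 g) (hgC : ∀ z, ‖g z‖ ≤ C) (hgC' : ∀ z, ‖fderiv ℝ g z‖ ≤ C') (x v : G) :
    fderiv ℝ (f ⋆[lsmul ℝ ℝ, μ] g) x v = (f ⋆[lsmul ℝ ℝ, μ] fun z => fderiv ℝ g z v) x := by
  rw [(hasFDerivAt_convolution_of_bounded hf hg hgC hgC' x).fderiv]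
  exact ContinuousLinearMap.integral_apply (convolutionExists_of_integrable_of_bounded hf
    (hg.continuous_fderiv one_ne_zero) hgC' x) v

lemma hasDerivAt_convolution_param_of_bounded {g g' : ℝ → G → F} {s₀ : ℝ} (hf : Integrable f μ)
    (hg : ∀ᶠ s in 𝓝 s₀, Continuous (g s)) (hgC : ∀ z, ‖g s₀ z‖ ≤ C) (hg' : Continuous (g' s₀))
    (hgg' : ∀ᶠ s in 𝓝 s₀, ∀ z, HasDerivAt (fun s => g s z) (g' s z) s)
    (hgC' : ∀ᶠ s in 𝓝 s₀, ∀ z, ‖g' s z‖ ≤ C') (x : G) :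
    HasDerivAt (fun s => (f ⋆[lsmul ℝ ℝ, μ] g s) x) ((f ⋆[lsmul ℝ ℝ, μ] g' s₀) x) s₀ := by
  refine (hasDerivAt_integral_of_dominated_loc_of_deriv_le (bound := fun y => ‖f y‖ * C')
    (F := fun s y => f y • g s (x - y)) (F' := fun s y => f y • g' s (x - y)) (hgg'.and hgC') ?_
    (convolutionExists_of_integrable_of_bounded hf hg.self_of_nhds hgC x)
    (convolutionExists_of_integrable_of_bounded hf hg' hgC'.self_of_nhds x).aestronglyMeasurable
    (Eventually.of_forall fun y s hs => ?_) (hf.norm.mul_const C')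
    (Eventually.of_forall fun y s hs => (hs.1 (x - y)).const_smul (f y))).2
  · filter_upwards [hg] with s hs
    exact hf.aestronglyMeasurable.smul
      (hs.comp (by fun_prop : Continuous fun y => x - y)).aestronglyMeasurable
  · rw [norm_smul]
    gcongr
    exact hs.2 _

lemma laplacian_convolution_of_bounded {d : ℕ} {f g : EuclideanSpace ℝ (Fin d) → ℝ} {C'' : ℝ}
    (hf : Integrable f) (hg : ContDiff ℝ 2 g) (hgC : ∀ z, ‖g z‖ ≤ C)
    (hgC' : ∀ z, ‖fderiv ℝ g z‖ ≤ C')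
    (hgC'' : ∀ j z, ‖fderiv ℝ (fun y => fderiv ℝ g y (EuclideanSpace.single j 1)) z‖ ≤ C'')
    (x : EuclideanSpace ℝ (Fin d)) :
    laplacian (f ⋆ g) x = (f ⋆ laplacian g) x := by
  have hpartial (j : Fin d) :
      ContDiff ℝ 1 fun y => fderiv ℝ g y (EuclideanSpace.single j 1) :=
    (hg.fderiv_right (by norm_num)).clm_apply contDiff_const
  have hcoord {A : EuclideanSpace ℝ (Fin d) →L[ℝ] ℝ} {B : ℝ} (hA : ‖A‖ ≤ B) (j : Fin d) :
      ‖A (EuclideanSpace.single j 1)‖ ≤ B := by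
    simpa using A.le_of_opNorm_le hA (EuclideanSpace.single j 1)
  have hpartialC (j : Fin d) (z) : ‖fderiv ℝ g z (EuclideanSpace.single j 1)‖ ≤ C' :=
    hcoord (hgC' z) j
  simp only [laplacian, fderiv_convolution_apply_of_bounded hf (hg.of_le one_le_two) hgC hgC',
    fderiv_convolution_apply_of_bounded hf (hpartial _) (hpartialC _) (hgC'' _)]
  simp only [laplacian, convolution_def, map_sum]
  exact (integral_finsetSum _ fun j _ => convolutionExists_of_integrable_of_bounded hf
    (((hpartial j).continuous_fderiv one_ne_zero).clm_apply continuous_const)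
    (fun z => hcoord (hgC'' j z) j) x).symm

end Convolution

section HeatKernel

open MeasureTheory Module
open scoped Convolution RealInnerProductSpace

variable {V : Type*} [NormedAddCommGroup V] [InnerProductSpace ℝ V] {c : ℝ}

/-- The centred Gaussian density with covariance `c` times the identity, i.e. the fundamental
solution at time `c` of the heat equation `∂_c g = Δ g / 2`, on a finite-dimensional inner product
space. -/
def heatKernel (c : ℝ) (z : V) : ℝ :=
  (2 * π * c) ^ (-(finrank ℝ V : ℝ) / 2) * Real.exp (-‖z‖ ^ 2 / (2 * c))

lemma heatKernel_nonneg (hc : 0 ≤ c) (z : V) : 0 ≤ heatKernel c z := by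
  unfold heatKernel
  positivity

lemma contDiff_heatKernel {n : WithTop ℕ∞} : ContDiff ℝ n (heatKernel c : V → ℝ) :=
  contDiff_const.mul (((contDiff_norm_sq ℝ).neg.div_const (2 * c)).exp)

lemma one_add_norm_sq_mul_heatKernel_le (hc : 0 < c) (z : V) :
    (1 + ‖z‖ ^ 2) * heatKernel c z ≤ (1 + 2 * c) * (2 * π * c) ^ (-(finrank ℝ V : ℝ) / 2) := by
  have hexp : (1 + ‖z‖ ^ 2) * Real.exp (-‖z‖ ^ 2 / (2 * c)) ≤ 1 + 2 * c := by
    rw [neg_div, Real.exp_neg, ← div_eq_mul_inv, div_le_iff₀ (Real.exp_pos _)]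
    calc 1 + ‖z‖ ^ 2 ≤ (1 + 2 * c) * (‖z‖ ^ 2 / (2 * c) + 1) := by
          have : 0 ≤ ‖z‖ ^ 2 / (2 * c) := by positivity
          have : 2 * c * (‖z‖ ^ 2 / (2 * c)) = ‖z‖ ^ 2 := by field_simp
          linarith
      _ ≤ (1 + 2 * c) * Real.exp (‖z‖ ^ 2 / (2 * c)) := by
          gcongr
          exact Real.add_one_le_exp _
  calc (1 + ‖z‖ ^ 2) * heatKernel c z
      = (1 + ‖z‖ ^ 2) * Real.exp (-‖z‖ ^ 2 / (2 * c)) *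
          (2 * π * c) ^ (-(finrank ℝ V : ℝ) / 2) := by
        rw [heatKernel]; ring
    _ ≤ _ := by gcongr

lemma hasFDerivAt_heatKernel (c : ℝ) (z : V) :
    HasFDerivAt (heatKernel c) (-(heatKernel c z / c) • innerSL ℝ z) z := by
  have hexponent : HasFDerivAt (fun y : V => -‖y‖ ^ 2 / (2 * c)) (-(1 / c) • innerSL ℝ z) z := by
    refine ((hasFDerivAt_id z).norm_sq.neg.mul_const (2 * c)⁻¹).congr_fderiv ?_
    ext v
    simp only [id_eq, ContinuousLinearMap.comp_id, neg_apply, smul_apply, coe_innerSL_apply,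
      nsmul_eq_mul, Nat.cast_ofNat, smul_eq_mul]
    ring
  refine (hexponent.exp.const_mul _).congr_fderiv ?_
  ext v
  simp only [heatKernel, smul_apply, coe_innerSL_apply, smul_eq_mul]
  ring

lemma fderiv_heatKernel (c : ℝ) (z : V) :
    fderiv ℝ (heatKernel c) z = -(heatKernel c z / c) • innerSL ℝ z :=
  (hasFDerivAt_heatKernel c z).fderiv

lemma fderiv_fderiv_heatKernel_apply (c : ℝ) (v z : V) :
    fderiv ℝ (fun y => fderiv ℝ (heatKernel c) y v) z =
      heatKernel c z • ((⟪z, v⟫ / c ^ 2) • innerSL ℝ z - (1 / c) • innerSL ℝ v) := by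
  have hinner : HasFDerivAt (fun y : V => ⟪v, y⟫) (innerSL ℝ v) z := (innerSL ℝ v).hasFDerivAt
  have hprod := ((hasFDerivAt_heatKernel c z).mul hinner).const_mul (-(1 / c))
  have hpartial : (fun y => fderiv ℝ (heatKernel c) y v) =
      fun y => -(1 / c) * (heatKernel c y * ⟪v, y⟫) := by
    ext y
    simp only [fderiv_heatKernel, smul_apply, coe_innerSL_apply, real_inner_comm, smul_eq_mul]
    ring
  rw [hpartial]
  refine hprod.fderiv.trans ?_
  ext w
  simp only [add_apply, sub_apply, smul_apply, coe_innerSL_apply, smul_eq_mul, real_inner_comm]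
  ring

lemma norm_heatKernel_le (hc : 0 < c) (z : V) :
    ‖heatKernel c z‖ ≤ (1 + ‖z‖ ^ 2) * heatKernel c z := by
  rw [Real.norm_of_nonneg (heatKernel_nonneg hc.le z)]
  exact le_mul_of_one_le_left (heatKernel_nonneg hc.le z) (by simp)

lemma norm_fderiv_heatKernel_le (hc : 0 < c) (z : V) :
    ‖fderiv ℝ (heatKernel c) z‖ ≤ 1 / c * ((1 + ‖z‖ ^ 2) * heatKernel c z) := by
  have hg := heatKernel_nonneg hc.le z
  have hz : ‖z‖ ≤ 1 + ‖z‖ ^ 2 := by nlinarith [sq_nonneg (‖z‖ - 1)]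
  calc ‖fderiv ℝ (heatKernel c) z‖ = 1 / c * (‖z‖ * heatKernel c z) := by
        rw [fderiv_heatKernel, norm_smul, norm_neg, innerSL_apply_norm,
          Real.norm_of_nonneg (by positivity)]
        ring
    _ ≤ _ := by gcongr

lemma norm_fderiv_fderiv_heatKernel_apply_le (hc : 0 < c) (v z : V) :
    ‖fderiv ℝ (fun y => fderiv ℝ (heatKernel c) y v) z‖ ≤
      ‖v‖ * (1 / c ^ 2 + 1 / c) * ((1 + ‖z‖ ^ 2) * heatKernel c z) := by
  have hg := heatKernel_nonneg hc.le z
  have hsum : ‖(⟪z, v⟫ / c ^ 2) • innerSL ℝ z - (1 / c) • innerSL ℝ v‖ ≤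
      ‖z‖ * ‖v‖ / c ^ 2 * ‖z‖ + 1 / c * ‖v‖ := by
    refine (norm_sub_le _ _).trans ?_
    rw [norm_smul, norm_smul, innerSL_apply_norm, innerSL_apply_norm, norm_div,
      Real.norm_of_nonneg (by positivity : 0 ≤ c ^ 2),
      Real.norm_of_nonneg (by positivity : 0 ≤ 1 / c)]
    gcongr
    exact norm_inner_le_norm z v
  rw [fderiv_fderiv_heatKernel_apply, norm_smul, Real.norm_of_nonneg hg]
  calc heatKernel c z * ‖(⟪z, v⟫ / c ^ 2) • innerSL ℝ z - (1 / c) • innerSL ℝ v‖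
      ≤ heatKernel c z * (‖z‖ * ‖v‖ / c ^ 2 * ‖z‖ + 1 / c * ‖v‖) := by gcongr
    _ = ‖v‖ * (1 / c ^ 2 * ‖z‖ ^ 2 + 1 / c * 1) * heatKernel c z := by ring
    _ ≤ ‖v‖ * (1 / c ^ 2 * (1 + ‖z‖ ^ 2) + 1 / c * (1 + ‖z‖ ^ 2)) * heatKernel c z := by
        gcongr <;> simp
    _ = _ := by ring

lemma hasDerivAt_heatKernel (hc : 0 < c) (z : V) :
    HasDerivAt (fun s => heatKernel s z)
      ((‖z‖ ^ 2 / c ^ 2 - finrank ℝ V / c) * heatKernel c z / 2) c := by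
  have hlin : HasDerivAt (fun s : ℝ => 2 * π * s) (2 * π) c := by
    simpa using (hasDerivAt_id c).const_mul (2 * π)
  have hpow := hlin.rpow_const (p := -(finrank ℝ V : ℝ) / 2) (Or.inl (by positivity))
  have hexponent : HasDerivAt (fun s : ℝ => -‖z‖ ^ 2 / (2 * s)) (‖z‖ ^ 2 / (2 * c ^ 2)) c := by
    have hquot := (hasDerivAt_const c (-‖z‖ ^ 2)).div ((hasDerivAt_id' c).const_mul 2)
      (by positivity)
    refine hquot.congr_deriv ?_
    field_simp
    ring
  refine (hpow.mul hexponent.exp).congr_deriv ?_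
  rw [Real.rpow_sub_one (by positivity), heatKernel]
  field_simp
  ring

lemma laplacian_heatKernel {d : ℕ} (c : ℝ) (z : EuclideanSpace ℝ (Fin d)) :
    laplacian (heatKernel c) z = (‖z‖ ^ 2 / c ^ 2 - d / c) * heatKernel c z := by
  have hsecond (j : Fin d) :
      fderiv ℝ (fun y => fderiv ℝ (heatKernel c) y (EuclideanSpace.single j 1)) z
        (EuclideanSpace.single j 1) = (z j ^ 2 / c ^ 2 - 1 / c) * heatKernel c z := by
    rw [fderiv_fderiv_heatKernel_apply]
    simp only [smul_apply, sub_apply, coe_innerSL_apply, smul_eq_mul,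
      EuclideanSpace.inner_single_right, PiLp.single_apply, conj_trivial, if_true]
    ring
  simp only [laplacian, hsecond, ← Finset.sum_mul, Finset.sum_sub_distrib, ← Finset.sum_div,
    EuclideanSpace.real_norm_sq_eq, Finset.sum_const, Finset.card_univ, Fintype.card_fin,
    nsmul_eq_mul, mul_one]

/- Mathlib parametrises its Gaussian approximate identity by an inverse scale, which is
`(2 * π ^ 2 * c)⁻¹` for covariance `c`. -/
lemma tendsto_convolution_heatKernel [FiniteDimensional ℝ V] [MeasurableSpace V] [BorelSpace V]
    {f : V → ℝ} (hf : Integrable f) {x : V} (hx : ContinuousAt f x) :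
    Tendsto (fun c => (f ⋆ heatKernel c) x) (𝓝[>] 0) (𝓝 (f x)) := by
  have hscale : Tendsto (fun c : ℝ => (2 * π ^ 2)⁻¹ * c⁻¹) (𝓝[>] 0) atTop :=
    tendsto_inv_nhdsGT_zero.const_mul_atTop (by positivity)
  have hgauss := (tendsto_integral_gaussian_smul' hf.ofReal
    (Complex.continuous_ofReal.continuousAt.comp hx)).comp hscale
  refine Filter.tendsto_ofReal_iff.1 (hgauss.congr' ?_)
  filter_upwards [self_mem_nhdsWithin] with c (hc : 0 < c)
  have hpow : (2 * π * c) ^ (-(finrank ℝ V : ℝ) / 2) =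
      (π * ((2 * π ^ 2)⁻¹ * c⁻¹)) ^ ((finrank ℝ V : ℝ) / 2) := by
    rw [neg_div, Real.rpow_neg (by positivity), ← Real.inv_rpow (by positivity)]
    congr 1
    field_simp
  have hexponent (y : V) :
      -‖x - y‖ ^ 2 / (2 * c) = -π ^ 2 * ((2 * π ^ 2)⁻¹ * c⁻¹) * ‖x - y‖ ^ 2 := by
    field_simp
  simp only [Function.comp_apply, convolution_lsmul, ← integral_complex_ofReal, heatKernel, hpow,
    hexponent, smul_eq_mul, mul_comm (f _), Complex.ofReal_mul, Complex.ofReal_exp]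
  rw [Complex.ofReal_cpow (by positivity)]
  push_cast
  rfl

lemma laplacian_convolution_heatKernel {d : ℕ} {f : EuclideanSpace ℝ (Fin d) → ℝ}
    (hf : Integrable f) (hc : 0 < c) (x : EuclideanSpace ℝ (Fin d)) :
    laplacian (f ⋆ heatKernel c) x = (f ⋆ laplacian (heatKernel c)) x := by
  have hC := one_add_norm_sq_mul_heatKernel_le (V := EuclideanSpace ℝ (Fin d)) hc
  have hsecond (j : Fin d) (z : EuclideanSpace ℝ (Fin d)) :
      ‖fderiv ℝ (fun y => fderiv ℝ (heatKernel c) y (EuclideanSpace.single j 1)) z‖ ≤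
        (1 / c ^ 2 + 1 / c) * ((1 + 2 * c) *
          (2 * π * c) ^ (-(finrank ℝ (EuclideanSpace ℝ (Fin d)) : ℝ) / 2)) := by
    have h := norm_fderiv_fderiv_heatKernel_apply_le hc (EuclideanSpace.single j (1 : ℝ)) z
    rw [PiLp.norm_single, norm_one, one_mul] at h
    exact h.trans (mul_le_mul_of_nonneg_left (hC z) (by positivity))
  exact laplacian_convolution_of_bounded hf contDiff_heatKernel
    (fun z => (norm_heatKernel_le hc z).trans (hC z))
    (fun z => (norm_fderiv_heatKernel_le hc z).trans
      (mul_le_mul_of_nonneg_left (hC z) (by positivity))) hsecond x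

lemma exists_eventually_norm_laplacian_heatKernel_le {d : ℕ} (hc : 0 < c) :
    ∃ C, ∀ᶠ s in 𝓝 c, ∀ z : EuclideanSpace ℝ (Fin d), ‖laplacian (heatKernel s) z‖ ≤ C := by
  let B (s : ℝ) : ℝ := (1 / s ^ 2 + d / s) * ((1 + 2 * s) * (2 * π * s) ^ (-(d : ℝ) / 2))
  have hB : ContinuousAt B c := by
    have hc₂ : 2 * π * c ≠ 0 := by positivity
    fun_prop (disch := first | positivity | exact Or.inl hc₂)
  refine ⟨B c + 1, ?_⟩
  filter_upwards [hB.eventually_le_const (lt_add_one _), lt_mem_nhds hc] with s hsB hs z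
  have hg := heatKernel_nonneg hs.le z
  have hC := one_add_norm_sq_mul_heatKernel_le hs z
  rw [finrank_euclideanSpace_fin] at hC
  calc ‖laplacian (heatKernel s) z‖
      ≤ (‖z‖ ^ 2 / s ^ 2 + d / s) * heatKernel s z := by
        rw [laplacian_heatKernel, norm_mul, Real.norm_of_nonneg hg]
        gcongr
        refine (norm_sub_le _ _).trans_eq ?_
        rw [Real.norm_of_nonneg (by positivity), Real.norm_of_nonneg (by positivity)]
    _ ≤ (1 / s ^ 2 + d / s) * ((1 + ‖z‖ ^ 2) * heatKernel s z) := by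
        rw [← mul_assoc]
        gcongr
        have : 0 ≤ 1 / s ^ 2 + d / s * ‖z‖ ^ 2 := by positivity
        linear_combination this
    _ ≤ B s := mul_le_mul_of_nonneg_left hC (by positivity)
    _ ≤ B c + 1 := hsB

lemma hasDerivAt_convolution_heatKernel {d : ℕ} {f : EuclideanSpace ℝ (Fin d) → ℝ}
    (hf : Integrable f) (hc : 0 < c) (x : EuclideanSpace ℝ (Fin d)) :
    HasDerivAt (fun s => (f ⋆ heatKernel s) x) (laplacian (f ⋆ heatKernel c) x / 2) c := by
  obtain ⟨C, hC⟩ := exists_eventually_norm_laplacian_heatKernel_le (d := d) hc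
  have hheat : ∀ᶠ s in 𝓝 c, ∀ z : EuclideanSpace ℝ (Fin d),
      HasDerivAt (fun s => heatKernel s z) (((2 : ℝ)⁻¹ • laplacian (heatKernel s)) z) s := by
    filter_upwards [lt_mem_nhds hc] with s hs z
    refine (hasDerivAt_heatKernel hs z).congr_deriv ?_
    rw [Pi.smul_apply, smul_eq_mul, laplacian_heatKernel, finrank_euclideanSpace_fin,
      div_eq_inv_mul]
  have hcont : Continuous (laplacian (heatKernel c) : EuclideanSpace ℝ (Fin d) → ℝ) := by
    rw [funext (laplacian_heatKernel c)]
    exact ((by fun_prop : Continuous fun z : EuclideanSpace ℝ (Fin d) =>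
      ‖z‖ ^ 2 / c ^ 2 - d / c)).mul (contDiff_heatKernel (n := 0)).continuous
  refine (hasDerivAt_convolution_param_of_bounded (C' := 2⁻¹ * C) hf
    (g := heatKernel) (g' := fun s => (2 : ℝ)⁻¹ • laplacian (heatKernel s))
    (Eventually.of_forall fun s => (contDiff_heatKernel (n := 0)).continuous)
    (fun z => (norm_heatKernel_le hc z).trans (one_add_norm_sq_mul_heatKernel_le hc z))
    (hcont.const_smul _) hheat ?_ x).congr_deriv ?_
  · filter_upwards [hC] with s hs z
    rw [Pi.smul_apply, norm_smul, Real.norm_of_nonneg (by norm_num)]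
    gcongr
    exact hs z
  · rw [convolution_smul, Pi.smul_apply, smul_eq_mul, laplacian_convolution_heatKernel hf hc x,
      div_eq_inv_mul]

lemma integral_fbmKernel_mul (d : ℕ) (H t : ℝ) (f : EuclideanSpace ℝ (Fin d) → ℝ)
    (x : EuclideanSpace ℝ (Fin d)) :
    ∫ y, fbmKernel d H t x y * f y = (f ⋆ heatKernel (t ^ (2 * H))) x := by
  simp only [convolution_lsmul, fbmKernel, heatKernel, finrank_euclideanSpace_fin, smul_eq_mul,
    mul_comm (f _)]

end HeatKernel

open MeasureTheory in
theorem fbm_conformable_cauchy_general (d : ℕ) (H : ℝ) (hH : 0 < H)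
    (f : EuclideanSpace ℝ (Fin d) → ℝ) (hf : Integrable f)
    (u : ℝ → EuclideanSpace ℝ (Fin d) → ℝ)
    (hu : ∀ t : ℝ, 0 < t → ∀ x,
      u t x = ∫ y : EuclideanSpace ℝ (Fin d), fbmKernel d H t x y * f y) :
    (∀ t : ℝ, 0 < t → ∀ x : EuclideanSpace ℝ (Fin d),
        HasConformableDerivAt (2 * H) (fun s : ℝ => u s x)
          (H * laplacian (fun z => u t z) x) t) ∧
      ∀ x : EuclideanSpace ℝ (Fin d), ContinuousAt f x →
        Tendsto (fun t : ℝ => u t x) (𝓝[>] (0 : ℝ)) (𝓝 (f x)) := by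
  simp only [integral_fbmKernel_mul] at hu
  refine ⟨fun t ht x => ?_, fun x hx => ?_⟩
  · have hheat := hasDerivAt_convolution_heatKernel hf (Real.rpow_pos_of_pos ht (2 * H)) x
    rw [funext (hu t ht)]
    convert hasConformableDerivAt_of_eventuallyEq_comp_rpow ht hheat ?_ using 1
    · ring
    · filter_upwards [lt_mem_nhds ht] with s hs using hu s hs x
  · have hclock : Tendsto (fun t : ℝ => t ^ (2 * H)) (𝓝[>] 0) (𝓝[>] 0) := by
      refine tendsto_nhdsWithin_iff.2 ⟨?_, ?_⟩
      · have hcont := Real.continuousAt_rpow_const 0 (2 * H) (Or.inr (by positivity))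
        rw [ContinuousAt, Real.zero_rpow (by positivity)] at hcont
        exact hcont.mono_left nhdsWithin_le_nhds
      · filter_upwards [self_mem_nhdsWithin] with t ht using Real.rpow_pos_of_pos ht _
    refine ((tendsto_convolution_heatKernel hf hx).comp hclock).congr' ?_
    filter_upwards [self_mem_nhdsWithin] with t ht using (hu t ht x).symm

open MeasureTheory in
/-- Stochastic solution of the conformable fractional Cauchy problem for
fractional Brownian motion: with `u(t,x) = ∫ p(t,x,y) f(y) dy = E[f(x + Bᴴ(t))]`
for `t > 0` and `u(0,x) = f(x)`, we have `T_{2H} u = H Δₓ u` for `t > 0`, and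
`u(t,x) → f(x)` as `t → 0⁺`. -/
theorem fbm_conformable_cauchy (d : ℕ) (hd : 1 ≤ d) (H : ℝ)
    (hH : H ∈ Set.Ioo (0 : ℝ) (1 / 2))
    (f : EuclideanSpace ℝ (Fin d) → ℝ)
    (hf_cont : Continuous f) (hf_supp : HasCompactSupport f)
    (u : ℝ → EuclideanSpace ℝ (Fin d) → ℝ)
    (hu_pos : ∀ t : ℝ, 0 < t → ∀ x,
      u t x = ∫ y : EuclideanSpace ℝ (Fin d), fbmKernel d H t x y * f y)
    (hu_zero : ∀ x, u 0 x = f x) :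
    (∀ t : ℝ, 0 < t → ∀ x : EuclideanSpace ℝ (Fin d),
        HasConformableDerivAt (2 * H) (fun s : ℝ => u s x)
          (H * laplacian (fun z => u t z) x) t) ∧
      ∀ x : EuclideanSpace ℝ (Fin d),
        Tendsto (fun t : ℝ => u t x) (𝓝[>] (0 : ℝ)) (𝓝 (f x)) := by
  have hgeneral := fbm_conformable_cauchy_general d H hH.1 f
    (hf_cont.integrable_of_hasCompactSupport hf_supp) u hu_pos
  exact ⟨hgeneral.1, fun x => hgeneral.2 x hf_cont.continuousAt⟩
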